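/- For all nonnegative integers t with t ≢ 1 (mod 4) (i.e., t = 4k, 4k+2, or 4k+3 for some nonnegative integer k) and all n ≥ 0, the number of overpartition t-tuples satisfies p̄_t(4n+3) ≡ 0 (mod 16). -/

import Mathlib

/-- The number of overpartitions of `n`: a partition of `n` together with a
choice of which distinct part values are overlined (the first occurrence of a
part value may be overlined), so that the count is `∑_{λ ⊢ n} 2^{#distinct parts of λ}`. -/
def overpartitionCount (n : ℕ) : ℕ :=
  ∑ p : n.Partition, 2 ^ p.parts.toFinset.card

/-- The number of overpartition `t`-tuples of `n`: `t`-tuples of overpartitions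
whose sizes sum to `n`. -/
def overpartitionTuples (t n : ℕ) : ℕ :=
  ∑ c ∈ Finset.Nat.antidiagonalTuple t n, ∏ i, overpartitionCount (c i)

/-!
The generating function `P` of overpartitions is the inverse of the theta series
`φ = 1 + 2 S`, where `S = ∑_{k ≥ 1} (-1)^k q^{k²}` (Gauss); we obtain this as the limit of a
polynomial identity of Shanks. Modulo 16 one has `φ⁴ = 1 + 8 (S + S²)`, so `φ⁸ = 1`, and `P⁴ = φ⁴`.
If `t ≢ 1 (mod 4)`, then `t + r = 4 m` for some `r ≤ 2`, and `P^t = P^{4m} φ^r = φ^{4m} φ^r` is a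
combination of `1`, `S` and `S²` modulo 16. These series are supported on sums of two squares,
and no number congruent to 3 modulo 4 is such a sum.
-/

open PowerSeries Finset Filter
open scoped PowerSeries.WithPiTopology

section Shanks

variable {R : Type*} [CommRing R] (x : R)

/-- The product `(1 + x⁰) ⋯ (1 + x^(s-1)) (1 - x^(s+1)) ⋯ (1 - x^n)`. Up to sign and a power of
`x`, these are the summands of Shanks' finite form of Gauss's theta identity, with the common
denominator `(1 + x) ⋯ (1 + x^n)` cleared so that the identity holds in any commutative ring. -/
def shanksProd (n s : ℕ) : R :=
  (∏ k ∈ range s, (1 + x ^ k)) * ∏ k ∈ Ico (s + 1) (n + 1), (1 - x ^ k)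

lemma shanksProd_zero_right (n : ℕ) : shanksProd x n 0 = ∏ k ∈ range n, (1 - x ^ (k + 1)) := by
  simp [shanksProd, prod_Ico_eq_prod_range, add_comm]

lemma shanksProd_self (n : ℕ) : shanksProd x n n = ∏ k ∈ range n, (1 + x ^ k) := by
  simp [shanksProd]

lemma shanksProd_succ_left {n s : ℕ} (hs : s ≤ n) :
    shanksProd x (n + 1) s = shanksProd x n s * (1 - x ^ (n + 1)) := by
  rw [shanksProd, prod_Ico_succ_top (by lia), ← mul_assoc, shanksProd]

lemma prod_range_succ_one_add_pow (n : ℕ) :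
    ∏ k ∈ range (n + 1), (1 + x ^ k) = 2 * ∏ k ∈ range n, (1 + x ^ (k + 1)) := by
  rw [prod_range_succ', pow_zero, one_add_one_eq_two, mul_comm]

lemma sum_shanksProd_telescope (n : ℕ) :
    ∑ s ∈ range (n + 1), (-1) ^ s * x ^ (s * (n + 1)) * shanksProd x n s *
        ((1 - x ^ (n + 1)) * x ^ s - (1 + x ^ (n + 1))) =
      (-1) ^ (n + 1) * x ^ ((n + 1) ^ 2) * ∏ k ∈ range (n + 1), (1 + x ^ k) := by
  let G (s : ℕ) : R := (-1) ^ s * x ^ (s * (n + 1)) *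
    ((∏ k ∈ range s, (1 + x ^ k)) * ∏ k ∈ Ico s (n + 1), (1 - x ^ k))
  calc
    _ = ∑ s ∈ range (n + 1), (G (s + 1) - G s) := by
      refine sum_congr rfl fun s hs ↦ ?_
      simp only [G, shanksProd, prod_range_succ, prod_eq_prod_Ico_succ_bot (mem_range.mp hs)]
      ring
    _ = G (n + 1) - G 0 := sum_range_sub G (n + 1)
    _ = _ := by simp [G, prod_range_succ' (fun k ↦ 1 - x ^ k), sq]

theorem sum_shanksProd (n : ℕ) :
    ∑ s ∈ range (n + 1), (-1) ^ s * x ^ (s * (n + 1)) * shanksProd x n s =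
      (∏ k ∈ range n, (1 + x ^ (k + 1))) *
        (1 + 2 * ∑ s ∈ range n, (-1) ^ (s + 1) * x ^ ((s + 1) ^ 2)) := by
  induction n with
  | zero => simp [shanksProd]
  | succ n ih =>
    have summand_sub : ∀ s ∈ range (n + 1),
        (-1) ^ s * x ^ (s * (n + 1 + 1)) * shanksProd x (n + 1) s -
            (1 + x ^ (n + 1)) * ((-1) ^ s * x ^ (s * (n + 1)) * shanksProd x n s) =
          (-1) ^ s * x ^ (s * (n + 1)) * shanksProd x n s *
            ((1 - x ^ (n + 1)) * x ^ s - (1 + x ^ (n + 1))) := fun s hs ↦ by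
      rw [shanksProd_succ_left x (mem_range_succ_iff.mp hs)]
      ring
    have sum_sub := sum_congr rfl summand_sub
    rw [sum_sub_distrib, ← mul_sum, ih, sum_shanksProd_telescope, prod_range_succ_one_add_pow]
      at sum_sub
    rw [sum_range_succ _ (n + 1), shanksProd_self, prod_range_succ_one_add_pow,
      prod_range_succ (fun k ↦ 1 + x ^ (k + 1)),
      sum_range_succ (fun s ↦ (-1) ^ (s + 1) * x ^ ((s + 1) ^ 2))]
    linear_combination sum_sub

lemma pow_succ_dvd_prod_mul_theta_sub_prod (n : ℕ) :
    x ^ (n + 1) ∣ (∏ k ∈ range n, (1 + x ^ (k + 1))) *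
        (1 + 2 * ∑ s ∈ range n, (-1) ^ (s + 1) * x ^ ((s + 1) ^ 2)) -
      ∏ k ∈ range n, (1 - x ^ (k + 1)) := by
  rw [← sum_shanksProd, sum_range_succ', ← shanksProd_zero_right]
  simp only [pow_zero, zero_mul, one_mul, add_sub_cancel_right]
  refine dvd_sum fun s _ ↦ Dvd.dvd.mul_right (Dvd.dvd.mul_left (pow_dvd_pow x ?_) _) _
  exact Nat.le_mul_of_pos_left _ s.succ_pos

end Shanks

section GeneratingFunction

theorem coeff_pow_eq_sum_antidiagonalTuple {R : Type*} [CommSemiring R] (f : R⟦X⟧) (t n : ℕ) :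
    coeff n (f ^ t) = ∑ c ∈ Nat.antidiagonalTuple t n, ∏ i, coeff (c i) f := by
  have h := coeff_prod (fun _ : Fin t ↦ f) n univ
  rw [prod_const, card_univ, Fintype.card_fin] at h
  exact h.trans <| sum_bij' (fun l _ ↦ ⇑l) (fun c _ ↦ Finsupp.equivFunOnFinite.symm c)
    (by simp [Nat.mem_antidiagonalTuple]) (by simp [Nat.mem_antidiagonalTuple])
    (by simp) (by simp) (by simp)

theorem tendsto_of_X_pow_dvd_sub {R : Type*} [Ring R] [TopologicalSpace R] {f : ℕ → R⟦X⟧}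
    {g : R⟦X⟧} (h : ∀ N, X ^ N ∣ f N - g) : Tendsto f atTop (nhds g) := by
  refine (WithPiTopology.tendsto_iff_coeff_tendsto R f atTop g).mpr fun d ↦
    tendsto_atTop_of_eventually_const (i₀ := d + 1) fun N hN ↦ ?_
  rw [← sub_eq_zero, ← map_sub]
  exact X_pow_dvd_iff.mp (h N) d hN

variable (R : Type*) [CommRing R]

/-- The generating function `∑ p̄(n) q^n` of overpartitions, with coefficients cast to `R`. -/
noncomputable def overpartitionSeries : R⟦X⟧ := PowerSeries.mk fun n ↦ (overpartitionCount n : R)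

/-- The series `S = ∑_{k ≥ 1} (-1)^k q^{k²}`, for which `1 + 2 S` is Gauss's theta series `φ(-q)`.
The sign is encoded through `(-1)^{k²} = (-1)^k`. -/
noncomputable def alternatingSquareSeries : R⟦X⟧ :=
  PowerSeries.mk fun n ↦ if n ≠ 0 ∧ IsSquare n then (-1) ^ n else 0

lemma coeff_alternatingSquareSeries_succ_sq (k : ℕ) :
    coeff ((k + 1) ^ 2) (alternatingSquareSeries R) = (-1) ^ (k + 1) := by
  have even_iff : Even ((k + 1) ^ 2) ↔ Even (k + 1) := Nat.even_pow' two_ne_zero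
  simp [alternatingSquareSeries, IsSquare.sq, neg_one_pow_eq_ite, even_iff]

lemma coeff_alternatingSquareSeries_eq_zero {n : ℕ} (hn : ∀ k, (k + 1) ^ 2 ≠ n) :
    coeff n (alternatingSquareSeries R) = 0 := by
  rw [alternatingSquareSeries, coeff_mk, if_neg]
  rintro ⟨n_ne_zero, m, rfl⟩
  obtain ⟨k, rfl⟩ := Nat.exists_eq_succ_of_ne_zero (left_ne_zero_of_mul n_ne_zero)
  exact hn k (sq _)

lemma coeff_alternatingSquareSeries_sq_eq_zero {n : ℕ} (hn : ∀ x y, x ^ 2 + y ^ 2 ≠ n) :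
    coeff n (alternatingSquareSeries R ^ 2) = 0 := by
  rw [sq, coeff_mul]
  refine sum_eq_zero fun ⟨i, j⟩ hij ↦ ?_
  by_cases hi : ∃ k, (k + 1) ^ 2 = i
  · obtain ⟨k, rfl⟩ := hi
    rw [coeff_alternatingSquareSeries_eq_zero R (n := j), mul_zero]
    rintro l rfl
    exact hn (k + 1) (l + 1) (mem_antidiagonal.mp hij)
  · rw [coeff_alternatingSquareSeries_eq_zero R (not_exists.mp hi), zero_mul]

lemma overpartitionSeries_eq_genFun :
    overpartitionSeries R = Nat.Partition.genFun fun _ _ ↦ (2 : R) := by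
  ext n
  simp [overpartitionSeries, overpartitionCount, Finsupp.prod]

lemma coeff_overpartitionSeries_pow (t n : ℕ) :
    coeff n (overpartitionSeries R ^ t) = overpartitionTuples t n := by
  simp [coeff_pow_eq_sum_antidiagonalTuple, overpartitionSeries, overpartitionTuples]

section Topology

variable [TopologicalSpace R]

lemma one_add_tsum_two_smul_X_pow_mul [IsTopologicalRing R] [T2Space R] {k : ℕ} (hk : k ≠ 0) :
    (1 + ∑' j, (2 : R) • (X : R⟦X⟧) ^ (k * (j + 1))) * (1 - X ^ k) = 1 + X ^ k := by
  have hX : ((X : R⟦X⟧) ^ k).constantCoeff = 0 := by simp [hk]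
  have geometric : ∑' j, (2 : R) • (X : R⟦X⟧) ^ (k * (j + 1)) = 2 * X ^ k * ∑' j, (X ^ k) ^ j := by
    rw [← (WithPiTopology.summable_pow_of_constantCoeff_eq_zero hX).tsum_mul_left]
    refine tsum_congr fun j ↦ ?_
    rw [smul_eq_C_mul, map_ofNat]
    ring
  rw [geometric]
  linear_combination
    2 * X ^ k * WithPiTopology.tsum_pow_mul_one_sub_of_constantCoeff_eq_zero hX

lemma prod_one_add_tsum_two_smul_X_pow_mul [IsTopologicalRing R] [T2Space R] (N : ℕ) :
    (∏ i ∈ range N, (1 + ∑' j, (2 : R) • (X : R⟦X⟧) ^ ((i + 1) * (j + 1)))) *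
      ∏ i ∈ range N, (1 - X ^ (i + 1)) = ∏ i ∈ range N, (1 + X ^ (i + 1)) := by
  rw [← prod_mul_distrib]
  exact prod_congr rfl fun i _ ↦ one_add_tsum_two_smul_X_pow_mul R i.succ_ne_zero

lemma hasSum_alternatingSquareSeries :
    HasSum (fun s : ℕ ↦ (-1 : R⟦X⟧) ^ (s + 1) * X ^ ((s + 1) ^ 2))
      (alternatingSquareSeries R) := by
  have square_injective : Function.Injective fun s : ℕ ↦ (s + 1) ^ 2 := fun a b h ↦ by
    simpa using h
  convert (square_injective.hasSum_iff fun d hd ↦ ?_).mpr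
    (hasSum_of_monomials_self (alternatingSquareSeries R)) using 1
  · ext1 s
    rw [Function.comp_apply, coeff_alternatingSquareSeries_succ_sq, monomial_eq_C_mul_X_pow,
      map_pow, map_neg, map_one]
  · rw [coeff_alternatingSquareSeries_eq_zero R fun k hk ↦ hd ⟨k, hk⟩, map_zero]

end Topology

lemma isUnit_prod_one_sub_X_pow (N : ℕ) : IsUnit (∏ i ∈ range N, (1 - (X : R⟦X⟧) ^ (i + 1))) := by
  simp [isUnit_iff_constantCoeff]

theorem overpartitionSeries_mul_theta :
    overpartitionSeries R * (1 + 2 * alternatingSquareSeries R) = 1 := by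
  let _ : TopologicalSpace R := ⊥
  have _ : DiscreteTopology R := ⟨rfl⟩
  let Q (N : ℕ) : R⟦X⟧ :=
    ∏ i ∈ range N, (1 + ∑' j, (2 : R) • (X : R⟦X⟧) ^ ((i + 1) * (j + 1)))
  let φ (N : ℕ) : R⟦X⟧ := 1 + 2 * ∑ s ∈ range N, (-1) ^ (s + 1) * X ^ ((s + 1) ^ 2)
  have tendsto_Q : Tendsto Q atTop (nhds (overpartitionSeries R)) := by
    rw [overpartitionSeries_eq_genFun]
    exact (Nat.Partition.hasProd_genFun fun _ _ ↦ (2 : R)).tendsto_prod_nat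
  have tendsto_φ : Tendsto φ atTop (nhds (1 + 2 * alternatingSquareSeries R)) :=
    ((hasSum_alternatingSquareSeries R).tendsto_sum_nat.const_mul 2).const_add 1
  have dvd_Q_mul_φ_sub_one (N : ℕ) : X ^ N ∣ Q N * φ N - 1 := by
    rw [← (isUnit_prod_one_sub_X_pow R N).dvd_mul_left]
    refine (pow_dvd_pow X N.le_succ).trans ?_
    convert pow_succ_dvd_prod_mul_theta_sub_prod (X : R⟦X⟧) N using 1
    rw [← prod_one_add_tsum_two_smul_X_pow_mul]
    ring
  exact tendsto_nhds_unique (tendsto_Q.mul tendsto_φ)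
    (tendsto_of_X_pow_dvd_sub dvd_Q_mul_φ_sub_one)

end GeneratingFunction

section ModSixteen

variable {R : Type*} [CommRing R]

lemma one_add_two_mul_pow_four_mul (h_sixteen : (16 : R) = 0) (S : R) (m : ℕ) :
    (1 + 2 * S) ^ (4 * m) = 1 + 8 * m * (S + S ^ 2) := by
  induction m with
  | zero => simp
  | succ m ih =>
    rw [mul_add_one, pow_add, ih]
    push_cast
    linear_combination ((1 + 8 * m * (S + S ^ 2)) * (S ^ 2 + 2 * S ^ 3 + S ^ 4) +
      4 * m * (S + S ^ 2) ^ 2) * h_sixteen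

lemma pow_four_eq_of_mul_one_add_two_mul_eq_one (h_sixteen : (16 : R) = 0) {P S : R}
    (hPS : P * (1 + 2 * S) = 1) : P ^ 4 = (1 + 2 * S) ^ 4 := by
  have pow_eight : (1 + 2 * S) ^ 8 = 1 := by
    rw [one_add_two_mul_pow_four_mul h_sixteen S 2]
    linear_combination (S + S ^ 2) * h_sixteen
  calc
    P ^ 4 = P ^ 4 * (1 + 2 * S) ^ 8 := by rw [pow_eight, mul_one]
    _ = (P * (1 + 2 * S)) ^ 4 * (1 + 2 * S) ^ 4 := by ring
    _ = (1 + 2 * S) ^ 4 := by rw [hPS, one_pow, one_mul]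

theorem exists_pow_eq_of_mul_one_add_two_mul_eq_one (h_sixteen : (16 : R) = 0) {P S : R}
    (hPS : P * (1 + 2 * S) = 1) {t : ℕ} (ht : t % 4 ≠ 1) :
    ∃ a b : ℕ, P ^ t = 1 + a • S + b • S ^ 2 := by
  obtain ⟨m, r, hr, htr⟩ : ∃ m r, r ≤ 2 ∧ t + r = 4 * m :=
    ⟨(t + 3) / 4, 4 * ((t + 3) / 4) - t, by lia, by lia⟩
  have pow_eq : P ^ t = (1 + 8 * m * (S + S ^ 2)) * (1 + 2 * S) ^ r := calc
    P ^ t = P ^ t * (P * (1 + 2 * S)) ^ r := by rw [hPS, one_pow, mul_one]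
    _ = (P ^ 4) ^ m * (1 + 2 * S) ^ r := by rw [mul_pow, ← mul_assoc, ← pow_add, htr, pow_mul]
    _ = (1 + 8 * m * (S + S ^ 2)) * (1 + 2 * S) ^ r := by
      rw [pow_four_eq_of_mul_one_add_two_mul_eq_one h_sixteen hPS, ← pow_mul,
        one_add_two_mul_pow_four_mul h_sixteen]
  simp only [nsmul_eq_mul]
  interval_cases r
  · refine ⟨8 * m, 8 * m, ?_⟩
    push_cast
    linear_combination pow_eq
  · refine ⟨8 * m + 2, 8 * m, ?_⟩
    push_cast
    linear_combination pow_eq + m * (S + S ^ 2) * S * h_sixteen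
  · refine ⟨8 * m + 4, 8 * m + 4, ?_⟩
    push_cast
    linear_combination pow_eq + 2 * m * (S + S ^ 2) ^ 2 * h_sixteen

end ModSixteen

lemma sq_add_sq_ne_four_mul_add_three (n x y : ℕ) : x ^ 2 + y ^ 2 ≠ 4 * n + 3 := by
  have ne_three : ∀ a b : ZMod 4, a ^ 2 + b ^ 2 ≠ 3 := by decide
  intro h
  have four_eq_zero : (4 : ZMod 4) = 0 := rfl
  exact ne_three x y (by simpa [four_eq_zero] using congrArg (Nat.cast (R := ZMod 4)) h)

theorem overpartitionTuples_four_n_three_mod_sixteen_general {t n : ℕ} (ht : t % 4 ≠ 1)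
    (hn : ∀ x y, x ^ 2 + y ^ 2 ≠ n) : overpartitionTuples t n ≡ 0 [MOD 16] := by
  have h_sixteen : (16 : (ZMod 16)⟦X⟧) = 0 := by
    rw [← map_ofNat C 16, show (OfNat.ofNat 16 : ZMod 16) = 0 from rfl, map_zero]
  obtain ⟨a, b, pow_eq⟩ := exists_pow_eq_of_mul_one_add_two_mul_eq_one h_sixteen
    (overpartitionSeries_mul_theta (ZMod 16)) ht
  have n_ne_zero : n ≠ 0 := fun h ↦ hn 0 0 h.symm
  have coeff_S : coeff n (alternatingSquareSeries (ZMod 16)) = 0 :=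
    coeff_alternatingSquareSeries_eq_zero _ fun k ↦ by simpa using hn (k + 1) 0
  have coeff_S_sq := coeff_alternatingSquareSeries_sq_eq_zero (ZMod 16) hn
  rw [Nat.modEq_zero_iff_dvd, ← ZMod.natCast_eq_zero_iff, ← coeff_overpartitionSeries_pow, pow_eq]
  simp only [map_add, map_nsmul, coeff_one, n_ne_zero, if_false, coeff_S, coeff_S_sq, smul_zero,
    add_zero]

theorem overpartitionTuples_four_n_three_mod_sixteen (t n : ℕ) (ht : t % 4 ≠ 1) :
    overpartitionTuples t (4 * n + 3) ≡ 0 [MOD 16] :=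
  overpartitionTuples_four_n_three_mod_sixteen_general ht (sq_add_sq_ne_four_mul_add_three n)
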